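/- arXiv:2004.14953 — 4 statements merged into one kernel-verified Lean document; each statement's English description precedes it below -/
import Mathlib

section
/- Let p_A, p_B, q ∈ (0,1) and μ_A, μ_B > 0 with μ_A + μ_B = 1. Then the strict inequality p_A·(1 − p_B + p_B·q) > p_A·q·(1 + μ_A·(1 − p_A·q)·(1 − p_B)/(μ_A·p_A·q + μ_B·p_B)) holds if and only if μ_B·p_B·(1 − q) > μ_A·(1 − p_A)·q. (This is the key algebraic equivalence in the proof of Proposition 1: the left-hand side of the first inequality is the ex-ante probability of selecting a minority (A) candidate under the myopic rule without search, and the right-hand side is that probability with search, so the displayed condition characterizes exactly when expanding the candidate pool reduces minority hiring.) -/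
/-!
Both probabilities contain `pA * q`, the chance that the initial A-candidate is qualified and
signals it. Without search the rest is `pA * (1 - pB) * (1 - q)`. With search it is the chance
`(1 - pA * q) * (1 - pB)` that neither initial candidate signals, times the chance
`μA * pA * q / (μA * pA * q + μB * pB)` that the first signal found by searching comes from an
A-candidate. The factor `pA * (1 - pB)` is common, so the comparison is between `1 - q` and
`q * (μA * (1 - pA * q) / (μA * pA * q + μB * pB))`; on clearing the denominator the terms
`μA * pA * q ^ 2` cancel.
-/

section Field

variable {K : Type*} [Field K] {pA pB q μA μB : K}

theorem one_sub_sub_mul_div_eq_div (hD : μA * pA * q + μB * pB ≠ 0) :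
    1 - q - q * (μA * (1 - pA * q) / (μA * pA * q + μB * pB)) =
      (μB * pB * (1 - q) - μA * (1 - pA) * q) / (μA * pA * q + μB * pB) := by
  rw [← mul_div_assoc, sub_div' hD]
  ring

theorem selectionProb_sub_searchSelectionProb (hD : μA * pA * q + μB * pB ≠ 0) :
    pA * (1 - pB + pB * q) -
        pA * q * (1 + μA * (1 - pA * q) * (1 - pB) / (μA * pA * q + μB * pB)) =
      pA * (1 - pB) *
        ((μB * pB * (1 - q) - μA * (1 - pA) * q) / (μA * pA * q + μB * pB)) := by
  rw [← one_sub_sub_mul_div_eq_div hD]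
  ring

end Field

theorem stmt_0_general {K : Type*} [Field K] [LinearOrder K] [IsStrictOrderedRing K]
    {pA pB q μA μB : K} (hpA : 0 < pA) (hpB : pB < 1) (hD : 0 < μA * pA * q + μB * pB) :
    pA * (1 - pB + pB * q) >
      pA * q * (1 + μA * (1 - pA * q) * (1 - pB) / (μA * pA * q + μB * pB)) ↔
    μB * pB * (1 - q) > μA * (1 - pA) * q := by
  have hfactor : 0 < pA * (1 - pB) := mul_pos hpA (sub_pos.2 hpB)
  rw [gt_iff_lt, ← sub_pos, selectionProb_sub_searchSelectionProb hD.ne',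
    mul_pos_iff_of_pos_left hfactor, div_pos_iff_of_pos_right hD, sub_pos]

/-- Key algebraic equivalence in the proof of Proposition 1: the ex-ante probability of
selecting a minority (A) candidate under the myopic rule without search exceeds that
probability with search iff `μB * pB * (1 - q) > μA * (1 - pA) * q`. -/
theorem stmt_0 (pA pB q μA μB : ℝ)
    (hpA : pA ∈ Set.Ioo (0 : ℝ) 1) (hpB : pB ∈ Set.Ioo (0 : ℝ) 1)
    (hq : q ∈ Set.Ioo (0 : ℝ) 1) (hμA : 0 < μA) (hμB : 0 < μB)
    (hsum : μA + μB = 1) :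
    pA * (1 - pB + pB * q) >
      pA * q * (1 + μA * (1 - pA * q) * (1 - pB) / (μA * pA * q + μB * pB)) ↔
    μB * pB * (1 - q) > μA * (1 - pA) * q :=
  stmt_0_general hpA.1 hpB.2 <|
    add_pos (mul_pos (mul_pos hμA hpA.1) hq.1) (mul_pos hμB hpB.1)
end

section
/- The set of parameter tuples (δ, p_A, p_B, v_A, v_B, q, μ_A) ∈ ℝ⁷ satisfying all of the following strict inequalities is a nonempty open subset of ℝ⁷: 0 < δ < 1; 0 < p_B < p_A < 1; v_A > v_B > 0; 0 < q < 1; 1/2 < μ_A < 1; (i) p_A·q·v_A > p_B·v_B; (ii) p_B·v_B > δ·(μ_A·p_A·q·v_A + (1−μ_A)·p_B·v_B); (iii) (1−q)·p_A·q·v_A/((1−q)·p_A + 1 − p_A) < δ·(μ_A·p_A·q·v_A + (1−μ_A)·p_B·v_B); (iv) (1−μ_A)·p_B·(1−q) > μ_A·(1−p_A)·q; and moreover every tuple in this set satisfies p_A·(1 − p_B + p_B·q) > p_A·q·(1 + μ_A·(1−p_A·q)·(1−p_B)/(μ_A·p_A·q + (1−μ_A)·p_B)). In particular, the tuple (0.9,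 0.8, 0.7, 1.5, 1, 0.6, 2/3) belongs to this set. (This is the content of Proposition 1: under the myopic recruitment rule there exist parameters with minority candidates more valuable, more likely qualified, and more likely found by search, for which improving the search technology strictly reduces the ex-ante probability of selecting a minority candidate.) -/
/-- The conditions of Proposition 1 (myopic rule): parameter restrictions plus
conditions (i)-(iv) from the proof. -/
def GoodParams1 (δ pA pB vA vB q μA : ℝ) : Prop :=
  0 < δ ∧ δ < 1 ∧
  0 < pB ∧ pB < pA ∧ pA < 1 ∧
  vA > vB ∧ vB > 0 ∧
  0 < q ∧ q < 1 ∧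
  1 / 2 < μA ∧ μA < 1 ∧
  -- (i) the A-candidate is evaluated first under the myopic rule
  pA * q * vA > pB * vB ∧
  -- (ii) evaluating a blank-slate B-candidate is myopically preferred to search
  pB * vB > δ * (μA * pA * q * vA + (1 - μA) * pB * vB) ∧
  -- (iii) search is myopically preferred to re-evaluating a once-failed A-candidate
  (1 - q) * pA * q * vA / ((1 - q) * pA + 1 - pA) <
    δ * (μA * pA * q * vA + (1 - μA) * pB * vB) ∧
  -- (iv) condition under which search reduces the probability of selecting an A-candidate
  (1 - μA) * pB * (1 - q) > μA * (1 - pA) * q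

/-- The set of parameter tuples satisfying the conditions of Proposition 1. -/
def Params1 : Set (ℝ × ℝ × ℝ × ℝ × ℝ × ℝ × ℝ) :=
  {x | GoodParams1 x.1 x.2.1 x.2.2.1 x.2.2.2.1 x.2.2.2.2.1 x.2.2.2.2.2.1 x.2.2.2.2.2.2}

/-!
After a failed evaluation of the A-candidate and of the B-candidate, the rule without search keeps
re-evaluating the A-candidate, whereas the rule with search draws fresh candidates until one of them
is hired. The two resulting probabilities of selecting an A-candidate differ by a positive multiple
of `(1 - μA) * pB * (1 - q) - μA * (1 - pA) * q`, so condition (iv) decides which one is larger.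
Openness holds because every condition is a strict inequality between functions continuous at each
point of the set: the denominator in (iii) does not vanish there.
-/

section Ring

variable {R : Type*} [Ring R]

/-- The probability that one search yields a candidate who is hired after a single evaluation:
an A-candidate (drawn with probability `μA`) is hired with probability `pA * q`, a B-candidate with
probability `pB`, since evaluating a B-candidate reveals whether she is qualified. -/
def searchHireProb (pA pB q μA : R) : R :=
  μA * pA * q + (1 - μA) * pB

/-- The ex-ante probability of selecting the A-candidate when search is impossible. She is rejected,
if qualified, only when her first signal is negative and the B-candidate is qualified, so this is
`pA * (1 - (1 - q) * pB)`. -/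
def selectionProbNoSearch (pA pB q : R) : R :=
  pA * (1 - pB + pB * q)

variable [PartialOrder R] [IsStrictOrderedRing R]

theorem searchHireProb_pos {pA pB q μA : R} (hpA : 0 ≤ pA) (hpB : 0 < pB) (hq : 0 ≤ q)
    (hμ₀ : 0 ≤ μA) (hμ₁ : μA < 1) : 0 < searchHireProb pA pB q μA :=
  add_pos_of_nonneg_of_pos (mul_nonneg (mul_nonneg hμ₀ hpA) hq) (mul_pos (sub_pos.mpr hμ₁) hpB)

theorem negativeSignalProb_pos {p q : R} (hp₀ : 0 ≤ p) (hp₁ : p < 1) (hq : q ≤ 1) :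
    0 < (1 - q) * p + 1 - p := by
  rw [add_sub_assoc]
  exact add_pos_of_nonneg_of_pos (mul_nonneg (sub_nonneg.mpr hq) hp₀) (sub_pos.mpr hp₁)

end Ring

section Field

variable {K : Type*} [Field K]

/-- The ex-ante probability of selecting an A-candidate when search is possible. The initial
A-candidate is hired with probability `pA * q`; if both initial candidates fail, which has
probability `(1 - pA * q) * (1 - pB)`, search continues until someone is hired, and that
person is an A-candidate with probability `μA * pA * q / searchHireProb pA pB q μA`. -/
def selectionProbSearch (pA pB q μA : K) : K :=
  pA * q * (1 + μA * (1 - pA * q) * (1 - pB) / searchHireProb pA pB q μA)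

theorem selectionProbNoSearch_sub_selectionProbSearch {pA pB q μA : K}
    (hD : searchHireProb pA pB q μA ≠ 0) :
    selectionProbNoSearch pA pB q - selectionProbSearch pA pB q μA =
      pA * (1 - pB) / searchHireProb pA pB q μA *
        ((1 - μA) * pB * (1 - q) - μA * (1 - pA) * q) := by
  unfold selectionProbNoSearch selectionProbSearch
  field_simp
  unfold searchHireProb
  ring

variable [LinearOrder K] [IsStrictOrderedRing K]

theorem selectionProbSearch_lt_selectionProbNoSearch_iff {pA pB q μA : K} (hpA : 0 < pA)
    (hpB : pB < 1) (hD : 0 < searchHireProb pA pB q μA) :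
    selectionProbSearch pA pB q μA < selectionProbNoSearch pA pB q ↔
      μA * (1 - pA) * q < (1 - μA) * pB * (1 - q) := by
  have hcoeff : 0 < pA * (1 - pB) / searchHireProb pA pB q μA :=
    div_pos (mul_pos hpA (sub_pos.mpr hpB)) hD
  rw [← sub_pos, selectionProbNoSearch_sub_selectionProbSearch hD.ne',
    mul_pos_iff_of_pos_left hcoeff, sub_pos]

end Field

theorem GoodParams1.selectionProbSearch_lt_selectionProbNoSearch {δ pA pB vA vB q μA : ℝ}
    (h : GoodParams1 δ pA pB vA vB q μA) :
    selectionProbSearch pA pB q μA < selectionProbNoSearch pA pB q := by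
  obtain ⟨-, -, hpB, hBA, hpA₁, -, -, hq, -, hμ, hμ₁, -, -, -, hiv⟩ := h
  have hpA : 0 < pA := hpB.trans hBA
  have hμ₀ : 0 ≤ μA := one_half_pos.le.trans hμ.le
  have hD : 0 < searchHireProb pA pB q μA := searchHireProb_pos hpA.le hpB hq.le hμ₀ hμ₁
  exact (selectionProbSearch_lt_selectionProbNoSearch_iff hpA (hBA.trans hpA₁) hD).mpr hiv

theorem isOpen_params1 : IsOpen Params1 := by
  rw [isOpen_iff_eventually]
  rintro ⟨δ, pA, pB, vA, vB, q, μA⟩ h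
  simp only [Params1, GoodParams1, Set.mem_ofPred_eq, gt_iff_lt, Filter.eventually_and] at h ⊢
  obtain ⟨hδ₀, hδ₁, hpB, hBA, hpA, hv, hvB, hq₀, hq₁, hμ₀, hμ₁, hi, hii, hiii, hiv⟩ := h
  have hden : (1 - q) * pA + 1 - pA ≠ 0 :=
    (negativeSignalProb_pos (hpB.trans hBA).le hpA hq₁.le).ne'
  refine ⟨?_, ?_, ?_, ?_, ?_, ?_, ?_, ?_, ?_, ?_, ?_, ?_, ?_, ?_, ?_⟩
  all_goals
    refine ContinuousAt.eventually_lt ?_ ?_ (by assumption) <;> fun_prop (disch := assumption)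

theorem witness_mem_params1 :
    ((0.9 : ℝ), (0.8 : ℝ), (0.7 : ℝ), (1.5 : ℝ), (1 : ℝ), (0.6 : ℝ), (2 / 3 : ℝ)) ∈ Params1 := by
  simp only [Params1, GoodParams1, Set.mem_ofPred_eq]
  norm_num

/-- Proposition 1 (myopic rule): the set of parameters is a nonempty open subset of ℝ⁷,
every tuple in it satisfies the strict inequality saying that improving the search
technology reduces the ex-ante probability of selecting a minority (A) candidate,
and the explicit tuple (0.9, 0.8, 0.7, 1.5, 1, 0.6, 2/3) belongs to the set. -/
theorem stmt_1 :
    Params1.Nonempty ∧ IsOpen Params1 ∧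
    (∀ δ pA pB vA vB q μA : ℝ, GoodParams1 δ pA pB vA vB q μA →
      pA * (1 - pB + pB * q) >
        pA * q * (1 + μA * (1 - pA * q) * (1 - pB) / (μA * pA * q + (1 - μA) * pB))) ∧
    ((0.9 : ℝ), (0.8 : ℝ), (0.7 : ℝ), (1.5 : ℝ), (1 : ℝ), (0.6 : ℝ), (2 / 3 : ℝ)) ∈ Params1 := by
  exact ⟨⟨_, witness_mem_params1⟩, isOpen_params1,
    fun _ _ _ _ _ _ _ h ↦ h.selectionProbSearch_lt_selectionProbNoSearch, witness_mem_params1⟩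
end

section
/- For (δ, p_A, p_B, v_A, v_B, q, μ_A) ∈ ℝ⁷, define μ_B = 1−μ_A, λ_A = p_A·q, λ_A0 = q·(1−q)·p_A/((1−q)·p_A + 1 − p_A), V_A = λ_A·v_A/(1 − δ·(1−λ_A)), V_B = p_B·v_B/(1 − δ·(1−p_B)), V_A0 = λ_A0·v_A/(1 − δ·(1−λ_A0)), and V_S = δ·(μ_A·λ_A·v_A + μ_B·p_B·v_B)/(1 − δ² + δ²·(μ_A·λ_A + μ_B·p_B)). The set of tuples satisfying all of the following strict inequalities is a nonempty open subset of ℝ⁷: 0 < δ < 1; 0 < p_B < p_A < 1; v_A > v_B > 0; 0 < q < 1; 1/2 < μ_A < 1; (15) V_B > V_A; (16) V_A > V_S, V_B > V_S, and V_S > V_A0; (8) μ_B·p_B·(1−q) > μ_A·(1−p_A)·q; and moreover every tuple in this set satisfies (1−p_B)·p_A > (1−p_B)·λ_A·(μ_A + μ_B·p_B)/(μ_A·λ_A + μ_B·p_B). In particular, the tuple (0.9, 0.75, 0.7, 1.2, 1, 0.19, 0.52) belongs to this set. (This is the content of Proposition 3: under the optimal forward-looking index rule there exist parameters, with minority candidates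 more valuable, more likely qualified, and more likely found by search, for which improving the search technology strictly reduces the ex-ante probability of selecting a minority candidate.) -/
/-- The conditions of Proposition 3 (optimal forward-looking rule): parameter
restrictions plus conditions (15), (16), and (8) from the proof. -/
def GoodParams3 (δ pA pB vA vB q μA : ℝ) : Prop :=
  let μB := 1 - μA
  let lA := pA * q
  let lA0 := q * (1 - q) * pA / ((1 - q) * pA + 1 - pA)
  let VA := lA * vA / (1 - δ * (1 - lA))
  let VB := pB * vB / (1 - δ * (1 - pB))
  let VA0 := lA0 * vA / (1 - δ * (1 - lA0))
  let VS := δ * (μA * lA * vA + μB * pB * vB) /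
    (1 - δ ^ 2 + δ ^ 2 * (μA * lA + μB * pB))
  0 < δ ∧ δ < 1 ∧
  0 < pB ∧ pB < pA ∧ pA < 1 ∧
  vA > vB ∧ vB > 0 ∧
  0 < q ∧ q < 1 ∧
  1 / 2 < μA ∧ μA < 1 ∧
  -- (15): the B-candidate is evaluated first
  VB > VA ∧
  -- (16): blank-slate candidates beat search, which beats a once-failed A-candidate
  VA > VS ∧ VB > VS ∧ VS > VA0 ∧
  -- (8): the ex-ante probability of selecting an A-candidate is lower with search
  μB * pB * (1 - q) > μA * (1 - pA) * q

/-- The set of parameter tuples satisfying the conditions of Proposition 3. -/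
def Params3 : Set (ℝ × ℝ × ℝ × ℝ × ℝ × ℝ × ℝ) :=
  {x | GoodParams3 x.1 x.2.1 x.2.2.1 x.2.2.2.1 x.2.2.2.2.1 x.2.2.2.2.2.1 x.2.2.2.2.2.2}

/-!
Under the restrictions on the primitives every index is a continuous function of the parameters,
its denominator being `1 - d * (1 - s)` with discount factor `d ∈ {δ, δ ^ 2}` and success
probability `s`; hence the strict conditions survive small perturbations. Improving the search
technology lowers the probability of selecting an A-candidate by a positive multiple of
`μB * pB * (1 - q) - μA * (1 - pA) * q`, so it does so exactly under condition (8).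
-/

section Indices

/-- Gittins index of a candidate who, at each evaluation, passes with probability `p` and is then
hired for the value `v`, under discount factor `δ`. -/
noncomputable def gittinsIndex (δ p v : ℝ) : ℝ :=
  p * v / (1 - δ * (1 - p))

/-- Index of searching under discount factor `δ`, when the candidate found passes evaluation with
probability `s` and the resulting expected hiring value is `r`. A search and the evaluation that
follows it take two periods, hence the `δ ^ 2`. -/
noncomputable def searchIndex (δ r s : ℝ) : ℝ :=
  δ * r / (1 - δ ^ 2 + δ ^ 2 * s)

/-- Probability that a second evaluation is positive after a first negative one, for a candidate
with prior `p` of being qualified who, when qualified, passes an evaluation with probability `q`: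
`q` times the Bayesian posterior of being qualified. -/
noncomputable def passProbAfterFailure (p q : ℝ) : ℝ :=
  q * (1 - q) * p / ((1 - q) * p + 1 - p)

theorem one_sub_mul_one_sub_pos {R : Type*} [CommRing R] [LinearOrder R] [IsStrictOrderedRing R]
    {δ p : R} (hδ₀ : 0 ≤ δ) (hδ₁ : δ < 1) (hp : 0 ≤ p) : 0 < 1 - δ * (1 - p) :=
  calc
    0 < (1 - δ) + δ * p := add_pos_of_pos_of_nonneg (sub_pos.2 hδ₁) (mul_nonneg hδ₀ hp)
    _ = 1 - δ * (1 - p) := by ring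

theorem passProbAfterFailure_nonneg {p q : ℝ} (hp₀ : 0 ≤ p) (hp₁ : p ≤ 1) (hq₀ : 0 ≤ q)
    (hq₁ : q ≤ 1) : 0 ≤ passProbAfterFailure p q := by
  have hq' : 0 ≤ 1 - q := sub_nonneg.2 hq₁
  have hden : 0 ≤ (1 - q) * p + 1 - p := by linarith [mul_nonneg hq' hp₀]
  exact div_nonneg (mul_nonneg (mul_nonneg hq₀ hq') hp₀) hden

variable {X : Type*} [TopologicalSpace X] {x : X} {δ p q r s v : X → ℝ}

theorem continuousAt_gittinsIndex (hδ : ContinuousAt δ x) (hp : ContinuousAt p x)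
    (hv : ContinuousAt v x) (hδ₀ : 0 ≤ δ x) (hδ₁ : δ x < 1) (hp₀ : 0 ≤ p x) :
    ContinuousAt (fun y ↦ gittinsIndex (δ y) (p y) (v y)) x :=
  (hp.mul hv).div (by fun_prop) (one_sub_mul_one_sub_pos hδ₀ hδ₁ hp₀).ne'

theorem continuousAt_searchIndex (hδ : ContinuousAt δ x) (hr : ContinuousAt r x)
    (hs : ContinuousAt s x) (hδ₀ : 0 ≤ δ x) (hδ₁ : δ x < 1) (hs₀ : 0 ≤ s x) :
    ContinuousAt (fun y ↦ searchIndex (δ y) (r y) (s y)) x := by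
  have hden : 0 < 1 - δ x ^ 2 * (1 - s x) :=
    one_sub_mul_one_sub_pos (sq_nonneg _) (pow_lt_one₀ hδ₀ hδ₁ two_ne_zero) hs₀
  refine (hδ.mul hr).div (by fun_prop) (ne_of_gt ?_)
  linarith

theorem continuousAt_passProbAfterFailure (hp : ContinuousAt p x) (hq : ContinuousAt q x)
    (hpq : p x * q x ≠ 1) : ContinuousAt (fun y ↦ passProbAfterFailure (p y) (q y)) x := by
  refine ((hq.mul (continuousAt_const.sub hq)).mul hp).div (by fun_prop) fun hden ↦ hpq ?_
  linarith

end Indices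

section Selection

variable {K : Type*} [Field K] {pA pB q μA μB : K}

/-- Ex-ante probability of selecting the A-candidate when there is no search and the B-candidate
is evaluated first. -/
def selectionProb (pA pB : K) : K :=
  (1 - pB) * pA

/-- Ex-ante probability of selecting an A-candidate when search is available. With `l = pA * q`
and `D = μA * l + μB * pB`, it simplifies `(1 - pB) * (l + (1 - l) * (μA * l / D))`: if the
initial B- and A-candidates each fail one evaluation, search continues until some candidate
passes. -/
def selectionProbWithSearch (pA pB q μA μB : K) : K :=
  (1 - pB) * (pA * q) * (μA + μB * pB) / (μA * (pA * q) + μB * pB)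

theorem selectionProb_sub_selectionProbWithSearch (hD : μA * (pA * q) + μB * pB ≠ 0) :
    selectionProb pA pB - selectionProbWithSearch pA pB q μA μB =
      (1 - pB) * pA / (μA * (pA * q) + μB * pB) *
        (μB * pB * (1 - q) - μA * (1 - pA) * q) := by
  rw [selectionProb, selectionProbWithSearch, div_mul_eq_mul_div, eq_div_iff hD, sub_mul,
    div_mul_cancel₀ _ hD]
  ring

theorem selectionProbWithSearch_lt_selectionProb_iff [LinearOrder K] [IsStrictOrderedRing K]
    (hpA : 0 < pA) (hpB : pB < 1) (hD : 0 < μA * (pA * q) + μB * pB) :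
    selectionProbWithSearch pA pB q μA μB < selectionProb pA pB ↔
      μA * (1 - pA) * q < μB * pB * (1 - q) := by
  have hcoef : 0 < (1 - pB) * pA / (μA * (pA * q) + μB * pB) :=
    div_pos (mul_pos (sub_pos.2 hpB) hpA) hD
  rw [← sub_pos, selectionProb_sub_selectionProbWithSearch hD.ne', mul_pos_iff_of_pos_left hcoef,
    sub_pos]

end Selection

/-- The restrictions on the primitives in Proposition 3: A-candidates are more likely qualified,
more valuable, more likely found by search, and harder to evaluate. -/
structure PrimitiveRestrictions (δ pA pB vA vB q μA : ℝ) : Prop where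
  δ_pos : 0 < δ
  δ_lt_one : δ < 1
  pB_pos : 0 < pB
  pB_lt_pA : pB < pA
  pA_lt_one : pA < 1
  vB_lt_vA : vB < vA
  vB_pos : 0 < vB
  q_pos : 0 < q
  q_lt_one : q < 1
  half_lt_μA : 1 / 2 < μA
  μA_lt_one : μA < 1

namespace PrimitiveRestrictions

variable {δ pA pB vA vB q μA : ℝ}

theorem pA_pos (h : PrimitiveRestrictions δ pA pB vA vB q μA) : 0 < pA :=
  h.pB_pos.trans h.pB_lt_pA

theorem searchPassProb_pos (h : PrimitiveRestrictions δ pA pB vA vB q μA) :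
    0 < μA * (pA * q) + (1 - μA) * pB :=
  have hμA : 0 < μA := one_half_pos.trans h.half_lt_μA
  add_pos (mul_pos hμA (mul_pos h.pA_pos h.q_pos)) (mul_pos (sub_pos.2 h.μA_lt_one) h.pB_pos)

end PrimitiveRestrictions

theorem goodParams3_iff {δ pA pB vA vB q μA : ℝ} :
    GoodParams3 δ pA pB vA vB q μA ↔
      PrimitiveRestrictions δ pA pB vA vB q μA ∧
      gittinsIndex δ (pA * q) vA < gittinsIndex δ pB vB ∧
      searchIndex δ (μA * (pA * q) * vA + (1 - μA) * pB * vB) (μA * (pA * q) + (1 - μA) * pB) <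
        gittinsIndex δ (pA * q) vA ∧
      searchIndex δ (μA * (pA * q) * vA + (1 - μA) * pB * vB) (μA * (pA * q) + (1 - μA) * pB) <
        gittinsIndex δ pB vB ∧
      gittinsIndex δ (passProbAfterFailure pA q) vA <
        searchIndex δ (μA * (pA * q) * vA + (1 - μA) * pB * vB)
          (μA * (pA * q) + (1 - μA) * pB) ∧
      μA * (1 - pA) * q < (1 - μA) * pB * (1 - q) := by
  constructor
  · rintro ⟨hδ₀, hδ₁, hpB, hpBA, hpA, hvBA, hvB, hq₀, hq₁, hμ₀, hμ₁, hconditions⟩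
    exact ⟨⟨hδ₀, hδ₁, hpB, hpBA, hpA, hvBA, hvB, hq₀, hq₁, hμ₀, hμ₁⟩, hconditions⟩
  · rintro ⟨⟨hδ₀, hδ₁, hpB, hpBA, hpA, hvBA, hvB, hq₀, hq₁, hμ₀, hμ₁⟩, hconditions⟩
    exact ⟨hδ₀, hδ₁, hpB, hpBA, hpA, hvBA, hvB, hq₀, hq₁, hμ₀, hμ₁, hconditions⟩

section Openness

open Filter Topology

variable {X : Type*} [TopologicalSpace X] {x : X} {δ pA pB vA vB q μA : X → ℝ}

theorem eventually_primitiveRestrictions (hδ : ContinuousAt δ x) (hpA : ContinuousAt pA x)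
    (hpB : ContinuousAt pB x) (hvA : ContinuousAt vA x) (hvB : ContinuousAt vB x)
    (hq : ContinuousAt q x) (hμA : ContinuousAt μA x)
    (h : PrimitiveRestrictions (δ x) (pA x) (pB x) (vA x) (vB x) (q x) (μA x)) :
    ∀ᶠ y in 𝓝 x, PrimitiveRestrictions (δ y) (pA y) (pB y) (vA y) (vB y) (q y) (μA y) := by
  filter_upwards [hδ.eventually_const_lt h.δ_pos, hδ.eventually_lt_const h.δ_lt_one,
    hpB.eventually_const_lt h.pB_pos, hpB.eventually_lt hpA h.pB_lt_pA,
    hpA.eventually_lt_const h.pA_lt_one, hvB.eventually_lt hvA h.vB_lt_vA,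
    hvB.eventually_const_lt h.vB_pos, hq.eventually_const_lt h.q_pos,
    hq.eventually_lt_const h.q_lt_one, hμA.eventually_const_lt h.half_lt_μA,
    hμA.eventually_lt_const h.μA_lt_one]
    with y hδ₀ hδ₁ hpB₀ hpBA hpA₁ hvBA hvB₀ hq₀ hq₁ hμ₀ hμ₁
  exact ⟨hδ₀, hδ₁, hpB₀, hpBA, hpA₁, hvBA, hvB₀, hq₀, hq₁, hμ₀, hμ₁⟩

theorem eventually_goodParams3 (hδ : ContinuousAt δ x) (hpA : ContinuousAt pA x)
    (hpB : ContinuousAt pB x) (hvA : ContinuousAt vA x) (hvB : ContinuousAt vB x)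
    (hq : ContinuousAt q x) (hμA : ContinuousAt μA x)
    (h : GoodParams3 (δ x) (pA x) (pB x) (vA x) (vB x) (q x) (μA x)) :
    ∀ᶠ y in 𝓝 x, GoodParams3 (δ y) (pA y) (pB y) (vA y) (vB y) (q y) (μA y) := by
  obtain ⟨hprim, hAB, hSA, hSB, hA0S, hsel⟩ := goodParams3_iff.1 h
  have hδ₀ := hprim.δ_pos.le
  have hδ₁ := hprim.δ_lt_one
  have hpA₀ := hprim.pA_pos.le
  have hpA₁ := hprim.pA_lt_one
  have hq₀ := hprim.q_pos.le
  have hq₁ := hprim.q_lt_one.le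
  have hVA := continuousAt_gittinsIndex hδ (hpA.mul hq) hvA hδ₀ hδ₁ (mul_nonneg hpA₀ hq₀)
  have hVB := continuousAt_gittinsIndex hδ hpB hvB hδ₀ hδ₁ hprim.pB_pos.le
  have hlA0 := continuousAt_passProbAfterFailure hpA hq
    (mul_lt_one_of_nonneg_of_lt_one_left hpA₀ hpA₁ hq₁).ne
  have hVA0 := continuousAt_gittinsIndex hδ hlA0 hvA hδ₀ hδ₁
    (passProbAfterFailure_nonneg hpA₀ hpA₁.le hq₀ hq₁)
  have hVS := continuousAt_searchIndex hδ
    (r := fun y ↦ μA y * (pA y * q y) * vA y + (1 - μA y) * pB y * vB y)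
    (s := fun y ↦ μA y * (pA y * q y) + (1 - μA y) * pB y)
    (by fun_prop) (by fun_prop) hδ₀ hδ₁ hprim.searchPassProb_pos.le
  have hsel' : ∀ᶠ y in 𝓝 x, μA y * (1 - pA y) * q y < (1 - μA y) * pB y * (1 - q y) :=
    ContinuousAt.eventually_lt (by fun_prop) (by fun_prop) hsel
  filter_upwards [eventually_primitiveRestrictions hδ hpA hpB hvA hvB hq hμA hprim,
    hVA.eventually_lt hVB hAB, hVS.eventually_lt hVA hSA, hVS.eventually_lt hVB hSB,
    hVA0.eventually_lt hVS hA0S, hsel'] with y hprim hAB hSA hSB hA0S hsel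
  exact goodParams3_iff.2 ⟨hprim, hAB, hSA, hSB, hA0S, hsel⟩

theorem isOpen_params3 : IsOpen Params3 :=
  isOpen_iff_eventually.2 fun _ hx ↦
    eventually_goodParams3 (by fun_prop) (by fun_prop) (by fun_prop) (by fun_prop) (by fun_prop)
      (by fun_prop) (by fun_prop) hx

end Openness

theorem GoodParams3.selectionProbWithSearch_lt_selectionProb {δ pA pB vA vB q μA : ℝ}
    (h : GoodParams3 δ pA pB vA vB q μA) :
    selectionProbWithSearch pA pB q μA (1 - μA) < selectionProb pA pB := by
  obtain ⟨hprim, -, -, -, -, hsel⟩ := goodParams3_iff.1 h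
  exact (selectionProbWithSearch_lt_selectionProb_iff hprim.pA_pos
    (hprim.pB_lt_pA.trans hprim.pA_lt_one) hprim.searchPassProb_pos).2 hsel

-- Here `V_B ≈ 0.959`, `V_A ≈ 0.749`, `V_S ≈ 0.7324` and `V_A0 ≈ 0.7304`.
theorem goodParams3_example : GoodParams3 0.9 0.75 0.7 1.2 1 0.19 0.52 := by
  norm_num [GoodParams3]

/-- Proposition 3 (optimal rule): the set of parameters is a nonempty open subset of ℝ⁷,
every tuple in it satisfies the strict inequality saying that improving the search
technology reduces the ex-ante probability of selecting a minority (A) candidate,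
and the explicit tuple (0.9, 0.75, 0.7, 1.2, 1, 0.19, 0.52) belongs to the set. -/
theorem stmt_7 :
    Params3.Nonempty ∧ IsOpen Params3 ∧
    (∀ δ pA pB vA vB q μA : ℝ, GoodParams3 δ pA pB vA vB q μA →
      (1 - pB) * pA >
        (1 - pB) * (pA * q) * (μA + (1 - μA) * pB) / (μA * (pA * q) + (1 - μA) * pB)) ∧
    ((0.9 : ℝ), (0.75 : ℝ), (0.7 : ℝ), (1.2 : ℝ), (1 : ℝ), (0.19 : ℝ), (0.52 : ℝ)) ∈
      Params3 := by
  have hexample : ((0.9 : ℝ), (0.75 : ℝ), (0.7 : ℝ), (1.2 : ℝ), (1 : ℝ), (0.19 : ℝ),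
      (0.52 : ℝ)) ∈ Params3 := goodParams3_example
  exact ⟨⟨_, hexample⟩, isOpen_params3,
    fun _ _ _ _ _ _ _ h ↦ h.selectionProbWithSearch_lt_selectionProb, hexample⟩
end

section
/- For (δ, p_A, p_B, v_A, v_B, q_A, q_B, μ_A, ζ) ∈ ℝ⁹, define μ_B = 1−μ_A, λ_A = p_A·q_A, λ_B = p_B·q_B, p_A0 = (1−q_A)·p_A/(1−q_A·p_A), p_B0 = (1−q_B)·p_B/(1−q_B·p_B), λ_A0 = p_A0·q_A, λ_B0 = p_B0·q_B, p_B00 = (1−q_B)·p_B0/(1−q_B·p_B0), λ_B00 = p_B00·q_B, the index function V(λ, v) = λ·v/(1 − δ·(1−λ)), V_S0 = δ·(μ_A·λ_A·v_A + μ_B·λ_B·v_B)/(1 − δ² + δ²·(μ_A·λ_A + μ_B·λ_B)), and V_Sζ = (δ·(μ_A+ζ)·λ_A·v_A + δ·(μ_B−ζ)·v_B·(λ_B + δ·(1−λ_B)·λ_B0))/(1 − δ²·((μ_A+ζ)·(1−λ_A) + (μ_B−ζ)·(1−λ_B)·(1−λ_B0)·δ)). The set of tuples satisfying all of the following strict inequalities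 is a nonempty open subset of ℝ⁹: 0 < δ < 1; 0 < p_B < p_A < 1; v_A > v_B > 0; 0 < q_A < q_B < 1; 0 < μ_A < 1; 0 < ζ < μ_B; (18) V(λ_B, v_B) > V(λ_A, v_A); (19) V(λ_A, v_A) > V_S0, V(λ_B, v_B) > V_S0, V_S0 > V(λ_A0, v_A), and V_S0 > V(λ_B0, v_B); (21) V(λ_A, v_A) > V_Sζ, V(λ_B0, v_B) > V_Sζ, V_Sζ > V(λ_A0, v_A), and V_Sζ > V(λ_B00, v_B); (12) μ_A/(μ_A·λ_A + μ_B·λ_B) > (1−λ_B0)·(μ_A+ζ)/((μ_A+ζ)·λ_A + (μ_B−ζ)·(λ_B + λ_B0·(1−λ_B))). In particular, the tuple (0.9, 0.69, 0.68, 1.01, 1, 0.4, 0.8, 0.15, 0.01) belongs to this set. (This is the content of Proposition 4: under the optimal forward-looking index rule there exist parameters, with minority candidates more valuable and more likely qualified, for which shifting search probability ζ from non-minority to minority candidates strictly reduces the ex-ante probability of selecting a minority candidate.) -/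
/-- The Gittins index of a candidate with one-step success probability `l` and value `v`. -/
noncomputable def indexV (δ l v : ℝ) : ℝ := l * v / (1 - δ * (1 - l))

/-- The conditions of Proposition 4 (optimal forward-looking rule): parameter
restrictions plus conditions (18), (19), (21), and (12) from the proof. -/
def GoodParams4 (δ pA pB vA vB qA qB μA ζ : ℝ) : Prop :=
  let μB := 1 - μA
  let lA := pA * qA
  let lB := pB * qB
  let pA0 := (1 - qA) * pA / (1 - qA * pA)
  let pB0 := (1 - qB) * pB / (1 - qB * pB)
  let lA0 := pA0 * qA
  let lB0 := pB0 * qB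
  let pB00 := (1 - qB) * pB0 / (1 - qB * pB0)
  let lB00 := pB00 * qB
  let VS0 := δ * (μA * lA * vA + μB * lB * vB) /
    (1 - δ ^ 2 + δ ^ 2 * (μA * lA + μB * lB))
  let VSζ := (δ * (μA + ζ) * lA * vA + δ * (μB - ζ) * vB * (lB + δ * (1 - lB) * lB0)) /
    (1 - δ ^ 2 * ((μA + ζ) * (1 - lA) + (μB - ζ) * (1 - lB) * (1 - lB0) * δ))
  0 < δ ∧ δ < 1 ∧
  0 < pB ∧ pB < pA ∧ pA < 1 ∧
  vA > vB ∧ vB > 0 ∧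
  0 < qA ∧ qA < qB ∧ qB < 1 ∧
  0 < μA ∧ μA < 1 ∧
  0 < ζ ∧ ζ < μB ∧
  -- (18): the B-candidate is evaluated first
  indexV δ lB vB > indexV δ lA vA ∧
  -- (19): blank-slate candidates beat status-quo search, which beats once-failed candidates
  indexV δ lA vA > VS0 ∧ indexV δ lB vB > VS0 ∧
  VS0 > indexV δ lA0 vA ∧ VS0 > indexV δ lB0 vB ∧
  -- (21): under the policy, one failure suffices for an A-candidate's index, and two
  -- failures for a B-candidate's index, to drop below the search index
  indexV δ lA vA > VSζ ∧ indexV δ lB0 vB > VSζ ∧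
  VSζ > indexV δ lA0 vA ∧ VSζ > indexV δ lB00 vB ∧
  -- (12): the ex-ante probability of selecting an A-candidate is strictly lower
  -- under the policy
  μA / (μA * lA + μB * lB) >
    (1 - lB0) * (μA + ζ) / ((μA + ζ) * lA + (μB - ζ) * (lB + lB0 * (1 - lB)))

/-- The set of parameter tuples satisfying the conditions of Proposition 4. -/
def Params4 : Set (ℝ × ℝ × ℝ × ℝ × ℝ × ℝ × ℝ × ℝ × ℝ) :=
  {x | GoodParams4 x.1 x.2.1 x.2.2.1 x.2.2.2.1 x.2.2.2.2.1 x.2.2.2.2.2.1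
    x.2.2.2.2.2.2.1 x.2.2.2.2.2.2.2.1 x.2.2.2.2.2.2.2.2}

/-!
Every denominator in `GoodParams4` is built from numbers in `(0, 1)` by products, complements
`p ↦ 1 - p`, mixtures and Bayesian updating, so on the admissible domain it again lies in `(0, 1)`.
Hence all the indices are continuous there, and the finitely many strict inequalities between them
persist nearby; the explicit tuple satisfies them by rational arithmetic.
-/

open Filter Set Topology

/-- The posterior probability that a candidate with prior `p` is qualified after failing an
evaluation that every unqualified candidate fails and a qualified one passes with probability
`q`. -/
noncomputable def failurePosterior (p q : ℝ) : ℝ := (1 - q) * p / (1 - q * p)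

/-- The search index `V_S0`: search draws an A-candidate with probability `m` and a B-candidate
with probability `n`, whose success probabilities are `a` and `b`, and returns to search after one
failure. -/
noncomputable def statusQuoSearchIndex (δ m n a b vA vB : ℝ) : ℝ :=
  δ * (m * a * vA + n * b * vB) / (1 - δ ^ 2 + δ ^ 2 * (m * a + n * b))

/-- The search index `V_Sζ`: as for `statusQuoSearchIndex`, except that a B-candidate who fails is
evaluated once more, with success probability `b'`. -/
noncomputable def policySearchIndex (δ m n a b b' vA vB : ℝ) : ℝ :=
  (δ * m * a * vA + δ * n * vB * (b + δ * (1 - b) * b')) /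
    (1 - δ ^ 2 * (m * (1 - a) + n * (1 - b) * (1 - b') * δ))

/-- Conditions (18), (19), (21) and (12), in this order, as conditions on the success probabilities:
`a`, `a'` are those of an A-candidate after zero and one failures, `b`, `b'`, `b''` those of a
B-candidate after zero, one and two failures. Search draws the two groups with probabilities `m`,
`n` under the status quo and `mζ`, `nζ` under the policy. -/
def IndexConditions (δ m n mζ nζ a a' b b' b'' vA vB : ℝ) : Prop :=
  let VS0 := statusQuoSearchIndex δ m n a b vA vB
  let VSζ := policySearchIndex δ mζ nζ a b b' vA vB
  indexV δ a vA < indexV δ b vB ∧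
  VS0 < indexV δ a vA ∧ VS0 < indexV δ b vB ∧
  indexV δ a' vA < VS0 ∧ indexV δ b' vB < VS0 ∧
  VSζ < indexV δ a vA ∧ VSζ < indexV δ b' vB ∧
  indexV δ a' vA < VSζ ∧ indexV δ b'' vB < VSζ ∧
  (1 - b') * mζ / (mζ * a + nζ * (b + b' * (1 - b))) < m / (m * a + n * b)

section Continuity

variable {X : Type*} [TopologicalSpace X] {x : X}

/-- `f` is continuous at `x`, where its value is a probability other than `0` and `1`. Keeping both
facts together gives the continuity of a quotient from the shape of its denominator. -/
structure InteriorProbAt (f : X → ℝ) (x : X) : Prop where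
  continuousAt : ContinuousAt f x
  mem_Ioo : f x ∈ Ioo 0 1

namespace InteriorProbAt

variable {f g m n δ p q a b b' v vA vB : X → ℝ}

theorem pos (hf : InteriorProbAt f x) : 0 < f x := hf.mem_Ioo.1

theorem lt_one (hf : InteriorProbAt f x) : f x < 1 := hf.mem_Ioo.2

theorem ne_zero (hf : InteriorProbAt f x) : f x ≠ 0 := hf.pos.ne'

theorem one_sub (hf : InteriorProbAt f x) : InteriorProbAt (fun y ↦ 1 - f y) x :=
  ⟨continuousAt_const.sub hf.continuousAt, Ioo.one_sub_mem hf.mem_Ioo⟩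

theorem mul (hf : InteriorProbAt f x) (hg : InteriorProbAt g x) :
    InteriorProbAt (fun y ↦ f y * g y) x :=
  ⟨hf.continuousAt.mul hg.continuousAt, (⟨_, hf.mem_Ioo⟩ * ⟨_, hg.mem_Ioo⟩ : Ioo (0 : ℝ) 1).2⟩

theorem mix (hm : InteriorProbAt m x) (hn : InteriorProbAt n x) (hmn : m x + n x = 1)
    (hf : InteriorProbAt f x) (hg : InteriorProbAt g x) :
    InteriorProbAt (fun y ↦ m y * f y + n y * g y) x where
  continuousAt :=
    (hm.continuousAt.mul hf.continuousAt).add (hn.continuousAt.mul hg.continuousAt)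
  mem_Ioo := convex_Ioo 0 1 hf.mem_Ioo hg.mem_Ioo hm.pos.le hn.pos.le hmn

theorem add_mul_one_sub (hf : InteriorProbAt f x) (hg : InteriorProbAt g x) :
    InteriorProbAt (fun y ↦ f y + g y * (1 - f y)) x := by
  convert (hf.one_sub.mul hg.one_sub).one_sub using 2
  ring

theorem failurePosterior (hp : InteriorProbAt p x) (hq : InteriorProbAt q x) :
    InteriorProbAt (fun y ↦ failurePosterior (p y) (q y)) x := by
  have hden := (hq.mul hp).one_sub
  have hnum := hq.one_sub.mul hp
  refine ⟨hnum.continuousAt.div hden.continuousAt hden.ne_zero, div_pos hnum.pos hden.pos, ?_⟩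
  rw [_root_.failurePosterior, div_lt_one hden.pos]
  linarith [hp.lt_one]

theorem continuousAt_indexV (hδ : InteriorProbAt δ x) (ha : InteriorProbAt a x)
    (hv : ContinuousAt v x) : ContinuousAt (fun y ↦ indexV (δ y) (a y) (v y)) x :=
  have hden := (hδ.mul ha.one_sub).one_sub
  (ha.continuousAt.mul hv).div hden.continuousAt hden.ne_zero

theorem continuousAt_statusQuoSearchIndex (hδ : InteriorProbAt δ x) (hm : InteriorProbAt m x)
    (hn : InteriorProbAt n x) (hmn : m x + n x = 1) (ha : InteriorProbAt a x)
    (hb : InteriorProbAt b x) (hvA : ContinuousAt vA x) (hvB : ContinuousAt vB x) :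
    ContinuousAt (fun y ↦
      statusQuoSearchIndex (δ y) (m y) (n y) (a y) (b y) (vA y) (vB y)) x := by
  have hden : InteriorProbAt
      (fun y ↦ 1 - δ y ^ 2 + δ y ^ 2 * (m y * a y + n y * b y)) x := by
    convert ((hδ.mul hδ).mul (mix hm hn hmn ha hb).one_sub).one_sub using 2
    ring
  have hnum := hδ.continuousAt.mul
    (((hm.mul ha).continuousAt.mul hvA).add ((hn.mul hb).continuousAt.mul hvB))
  exact hnum.div hden.continuousAt hden.ne_zero

theorem continuousAt_policySearchIndex (hδ : InteriorProbAt δ x) (hm : InteriorProbAt m x)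
    (hn : InteriorProbAt n x) (hmn : m x + n x = 1) (ha : InteriorProbAt a x)
    (hb : InteriorProbAt b x) (hb' : InteriorProbAt b' x)
    (hvA : ContinuousAt vA x) (hvB : ContinuousAt vB x) :
    ContinuousAt (fun y ↦
      policySearchIndex (δ y) (m y) (n y) (a y) (b y) (b' y) (vA y) (vB y)) x := by
  have hden : InteriorProbAt (fun y ↦
      1 - δ y ^ 2 * (m y * (1 - a y) + n y * (1 - b y) * (1 - b' y) * δ y)) x := by
    convert ((hδ.mul hδ).mul
      (mix hm hn hmn ha.one_sub ((hb.one_sub.mul hb'.one_sub).mul hδ))).one_sub using 2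
    ring
  have hnum := (((hδ.mul hm).mul ha).continuousAt.mul hvA).add
    (((hδ.mul hn).continuousAt.mul hvB).mul
      (hb.continuousAt.add ((hδ.mul hb.one_sub).mul hb').continuousAt))
  exact hnum.div hden.continuousAt hden.ne_zero

end InteriorProbAt

theorem IndexConditions.eventually {δ m n mζ nζ a a' b b' b'' vA vB : X → ℝ}
    (hδ : InteriorProbAt δ x) (hm : InteriorProbAt m x) (hn : InteriorProbAt n x)
    (hmn : m x + n x = 1) (hmζ : InteriorProbAt mζ x) (hnζ : InteriorProbAt nζ x)
    (hmnζ : mζ x + nζ x = 1) (ha : InteriorProbAt a x) (ha' : InteriorProbAt a' x)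
    (hb : InteriorProbAt b x) (hb' : InteriorProbAt b' x) (hb'' : InteriorProbAt b'' x)
    (hvA : ContinuousAt vA x) (hvB : ContinuousAt vB x)
    (h : IndexConditions (δ x) (m x) (n x) (mζ x) (nζ x) (a x) (a' x) (b x) (b' x) (b'' x)
      (vA x) (vB x)) :
    ∀ᶠ y in 𝓝 x, IndexConditions (δ y) (m y) (n y) (mζ y) (nζ y) (a y) (a' y) (b y) (b' y)
      (b'' y) (vA y) (vB y) := by
  obtain ⟨hAB, hSA, hSB, hSA', hSB', hζA, hζB', hζA', hζB'', hsel⟩ := h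
  have hVA := hδ.continuousAt_indexV ha hvA
  have hVA' := hδ.continuousAt_indexV ha' hvA
  have hVB := hδ.continuousAt_indexV hb hvB
  have hVB' := hδ.continuousAt_indexV hb' hvB
  have hVB'' := hδ.continuousAt_indexV hb'' hvB
  have hVS0 := hδ.continuousAt_statusQuoSearchIndex hm hn hmn ha hb hvA hvB
  have hVSζ := hδ.continuousAt_policySearchIndex hmζ hnζ hmnζ ha hb hb' hvA hvB
  have hsuccess := hm.mix hn hmn ha hb
  have hsuccessζ := hmζ.mix hnζ hmnζ ha (hb.add_mul_one_sub hb')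
  have hratio := hm.continuousAt.div hsuccess.continuousAt hsuccess.ne_zero
  have hratioζ :=
    (hb'.one_sub.mul hmζ).continuousAt.div hsuccessζ.continuousAt hsuccessζ.ne_zero
  exact (hVA.eventually_lt hVB hAB).and <|
    (hVS0.eventually_lt hVA hSA).and <| (hVS0.eventually_lt hVB hSB).and <|
    (hVA'.eventually_lt hVS0 hSA').and <| (hVB'.eventually_lt hVS0 hSB').and <|
    (hVSζ.eventually_lt hVA hζA).and <| (hVSζ.eventually_lt hVB' hζB').and <|
    (hVA'.eventually_lt hVSζ hζA').and <| (hVB''.eventually_lt hVSζ hζB'').and <|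
    hratioζ.eventually_lt hratio hsel

theorem GoodParams4.eventually {δ pA pB vA vB qA qB μA ζ : X → ℝ}
    (cδ : ContinuousAt δ x) (cpA : ContinuousAt pA x) (cpB : ContinuousAt pB x)
    (cvA : ContinuousAt vA x) (cvB : ContinuousAt vB x) (cqA : ContinuousAt qA x)
    (cqB : ContinuousAt qB x) (cμA : ContinuousAt μA x) (cζ : ContinuousAt ζ x)
    (h : GoodParams4 (δ x) (pA x) (pB x) (vA x) (vB x) (qA x) (qB x) (μA x) (ζ x)) :
    ∀ᶠ y in 𝓝 x,
      GoodParams4 (δ y) (pA y) (pB y) (vA y) (vB y) (qA y) (qB y) (μA y) (ζ y) := by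
  obtain ⟨hδ0, hδ1, hpB0, hpBA, hpA1, hv, hvB0, hqA0, hqAB, hqB1, hμ0, hμ1, hζ0, hζμ, hindex⟩ := h
  have hδ : InteriorProbAt δ x := ⟨cδ, hδ0, hδ1⟩
  have hpA : InteriorProbAt pA x := ⟨cpA, hpB0.trans hpBA, hpA1⟩
  have hpB : InteriorProbAt pB x := ⟨cpB, hpB0, hpBA.trans hpA1⟩
  have hqA : InteriorProbAt qA x := ⟨cqA, hqA0, hqAB.trans hqB1⟩
  have hqB : InteriorProbAt qB x := ⟨cqB, hqA0.trans hqAB, hqB1⟩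
  have hμA : InteriorProbAt μA x := ⟨cμA, hμ0, hμ1⟩
  have hμB := hμA.one_sub
  have hμAζ : InteriorProbAt (fun y ↦ μA y + ζ y) x :=
    ⟨cμA.add cζ, by linarith, by linarith⟩
  have hμBζ : InteriorProbAt (fun y ↦ 1 - μA y - ζ y) x :=
    ⟨hμB.continuousAt.sub cζ, by linarith, by linarith⟩
  have hpA' := hpA.failurePosterior hqA
  have hpB' := hpB.failurePosterior hqB
  have hpB'' := hpB'.failurePosterior hqB
  have hindex' := IndexConditions.eventually hδ hμA hμB (by ring) hμAζ hμBζ (by ring)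
    (hpA.mul hqA) (hpA'.mul hqA) (hpB.mul hqB) (hpB'.mul hqB) (hpB''.mul hqB) cvA cvB hindex
  exact (cδ.eventually_const_lt hδ0).and <| (cδ.eventually_lt_const hδ1).and <|
    (cpB.eventually_const_lt hpB0).and <| (cpB.eventually_lt cpA hpBA).and <|
    (cpA.eventually_lt_const hpA1).and <| (cvB.eventually_lt cvA hv).and <|
    (cvB.eventually_const_lt hvB0).and <| (cqA.eventually_const_lt hqA0).and <|
    (cqA.eventually_lt cqB hqAB).and <| (cqB.eventually_lt_const hqB1).and <|
    (cμA.eventually_const_lt hμ0).and <| (cμA.eventually_lt_const hμ1).and <|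
    (cζ.eventually_const_lt hζ0).and <| (cζ.eventually_lt hμB.continuousAt hζμ).and hindex'

end Continuity

theorem isOpen_params4 : IsOpen Params4 :=
  isOpen_iff_eventually.2 fun _ hx ↦ GoodParams4.eventually (by fun_prop) (by fun_prop)
    (by fun_prop) (by fun_prop) (by fun_prop) (by fun_prop) (by fun_prop) (by fun_prop)
    (by fun_prop) hx

theorem goodParams4_example : GoodParams4 0.9 0.69 0.68 1.01 1 0.4 0.8 0.15 0.01 := by
  simp only [GoodParams4, indexV]
  norm_num

/-- Proposition 4 (optimal rule): the set of parameters is a nonempty open subset of ℝ⁹,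
and the explicit tuple (0.9, 0.69, 0.68, 1.01, 1, 0.4, 0.8, 0.15, 0.01) belongs to it. -/
theorem stmt_8 :
    Params4.Nonempty ∧ IsOpen Params4 ∧
    ((0.9 : ℝ), (0.69 : ℝ), (0.68 : ℝ), (1.01 : ℝ), (1 : ℝ), (0.4 : ℝ), (0.8 : ℝ),
      (0.15 : ℝ), (0.01 : ℝ)) ∈ Params4 := by
  have hmem : ((0.9 : ℝ), (0.69 : ℝ), (0.68 : ℝ), (1.01 : ℝ), (1 : ℝ), (0.4 : ℝ), (0.8 : ℝ),
      (0.15 : ℝ), (0.01 : ℝ)) ∈ Params4 := goodParams4_example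
  exact ⟨⟨_, hmem⟩, isOpen_params4, hmem⟩
end
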